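/- Let X be a complex Banach space, n,d ∈ ℕ with 1 ≤ d ≤ n, and p ∈ [1,∞). Then every function f : {-1,1}^n → X of degree at most d satisfies ‖f − 2^{-n} Σ_{δ ∈ {-1,1}^n} f(δ)‖_{L_p({-1,1}^n;X)} ≤ 3(log d + 1) · (2^{-n} Σ_{δ ∈ {-1,1}^n} ‖Σ_{i=1}^n δ_i ∂_i f‖_{L_p({-1,1}^n;X)}^p)^{1/p}. -/

import Mathlib

open scoped BigOperators ENNReal NNReal

noncomputable section

namespace HammingCube

variable {X : Type*} [NormedAddCommGroup X] [NormedSpace ℂ X]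

/-- The sign ±1 associated to a boolean coordinate. -/
def sgn (b : Bool) : ℝ := if b then 1 else -1

/-- The Walsh function `w_A(ε) = ∏_{i ∈ A} ε_i`. -/
def walsh {n : ℕ} (A : Finset (Fin n)) (ε : Fin n → Bool) : ℝ := ∏ i ∈ A, sgn (ε i)

/-- The Fourier–Walsh coefficient `f̂(A) = 2⁻ⁿ ∑_δ f(δ) w_A(δ)`. -/
def coeff {n : ℕ} (f : (Fin n → Bool) → X) (A : Finset (Fin n)) : X :=
  (2 ^ n : ℝ)⁻¹ • ∑ δ : Fin n → Bool, walsh A δ • f δ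

/-- `f` has degree at most `d`: `f̂(A) = 0` whenever `|A| > d`. -/
def degLE {n : ℕ} (f : (Fin n → Bool) → X) (d : ℕ) : Prop :=
  ∀ A : Finset (Fin n), d < A.card → coeff f A = 0

/-- `f` belongs to the `d`-th tail space: `f̂(A) = 0` whenever `|A| < d`. -/
def tailSpace {n : ℕ} (f : (Fin n → Bool) → X) (d : ℕ) : Prop :=
  ∀ A : Finset (Fin n), A.card < d → coeff f A = 0

/-- The heat semigroup `e^{-tΔ} f = ∑_A e^{-t|A|} f̂(A) w_A`. -/
def heat {n : ℕ} (t : ℝ) (f : (Fin n → Bool) → X) : (Fin n → Bool) → X :=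
  fun ε => ∑ A : Finset (Fin n), Real.exp (-t * A.card) • walsh A ε • coeff f A

/-- The hypercube Laplacian `Δ f = ∑_A |A| f̂(A) w_A`. -/
def lap {n : ℕ} (f : (Fin n → Bool) → X) : (Fin n → Bool) → X :=
  fun ε => ∑ A : Finset (Fin n), (A.card : ℝ) • walsh A ε • coeff f A

/-- The fractional Laplacian `Δ^γ f = ∑_A |A|^γ f̂(A) w_A`. -/
def fracLap {n : ℕ} (γ : ℝ) (f : (Fin n → Bool) → X) : (Fin n → Bool) → X :=
  fun ε => ∑ A : Finset (Fin n), ((A.card : ℝ) ^ γ) • walsh A ε • coeff f A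

/-- The `i`-th discrete partial derivative. -/
def pderiv {n : ℕ} (i : Fin n) (f : (Fin n → Bool) → X) : (Fin n → Bool) → X :=
  fun ε => (2 : ℝ)⁻¹ • (f ε - f (Function.update ε i (!(ε i))))

/-- The vector-valued `L_p` norm `(2⁻ⁿ ∑_ε ‖f(ε)‖^p)^{1/p}` for finite `p`. -/
def lpNorm {n : ℕ} {Y : Type*} [NormedAddCommGroup Y] (p : ℝ)
    (f : (Fin n → Bool) → Y) : ℝ :=
  ((2 ^ n : ℝ)⁻¹ * ∑ ε : Fin n → Bool, ‖f ε‖ ^ p) ^ (1 / p)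

/-- The `L_∞` norm `max_ε ‖f(ε)‖`. -/
def linfNorm {n : ℕ} {Y : Type*} [NormedAddCommGroup Y]
    (f : (Fin n → Bool) → Y) : ℝ :=
  ⨆ ε : Fin n → Bool, ‖f ε‖

/-- The `L_p` norm for `p ∈ [1,∞]` encoded as `p : ℝ≥0∞`. -/
def lpNormE {n : ℕ} {Y : Type*} [NormedAddCommGroup Y] (p : ℝ≥0∞)
    (f : (Fin n → Bool) → Y) : ℝ :=
  if p = ⊤ then linfNorm f else lpNorm p.toReal f

/-- The scalar `L_p` norm of the gradient `‖(∑_i |∂_i f|²)^{1/2}‖_{L_p}`. -/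
def gradLpNorm {n : ℕ} (p : ℝ) (f : (Fin n → Bool) → ℂ) : ℝ :=
  lpNorm p (fun ε => Real.sqrt (∑ i : Fin n, ‖pderiv i f ε‖ ^ 2))

/-- The Rademacher projection `Rad f(ε) = ∑_i f̂({i}) ε_i`. -/
def Rad {n : ℕ} (f : (Fin n → Bool) → X) : (Fin n → Bool) → X :=
  fun ε => ∑ i : Fin n, sgn (ε i) • coeff f {i}

/-- A complex Banach space is `K`-convex if the Rademacher projections are uniformly
bounded on `L_q` for some `q ∈ (1,∞)`. -/
def KConvex (X : Type*) [NormedAddCommGroup X] [NormedSpace ℂ X] : Prop :=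
  ∃ q : ℝ, 1 < q ∧ ∃ M : ℝ, ∀ (n : ℕ) (f : (Fin n → Bool) → X),
    lpNorm q (Rad f) ≤ M * lpNorm q f

/-- `X` has cotype `q` with constant `C`. -/
def HasCotype (X : Type*) [NormedAddCommGroup X] [NormedSpace ℂ X] (q C : ℝ) : Prop :=
  ∀ (n : ℕ) (x : Fin n → X),
    C⁻¹ * (∑ i : Fin n, ‖x i‖ ^ q) ^ (1 / q) ≤
      ((2 ^ n : ℝ)⁻¹ * ∑ ε : Fin n → Bool, ‖∑ i : Fin n, sgn (ε i) • x i‖ ^ q) ^ (1 / q)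

/-- The entropy `Ent(h)` of a nonnegative function on the cube. -/
def entropy {n : ℕ} (h : (Fin n → Bool) → ℝ) : ℝ :=
  (2 ^ n : ℝ)⁻¹ * ∑ ε : Fin n → Bool, h ε * Real.log (h ε) -
    ((2 ^ n : ℝ)⁻¹ * ∑ ε : Fin n → Bool, h ε) *
      Real.log ((2 ^ n : ℝ)⁻¹ * ∑ ε : Fin n → Bool, h ε)

/-- The `L_∞` norm of the gradient `max_ε (∑_i |∂_i f(ε)|²)^{1/2}`. -/
def gradLinfNorm {n : ℕ} (f : (Fin n → Bool) → ℂ) : ℝ :=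
  ⨆ ε : Fin n → Bool, Real.sqrt (∑ i : Fin n, ‖pderiv i f ε‖ ^ 2)

/-!
Write `T_r f = ∑_A r^|A| f̂(A) w_A` for the noise operator and
`N = (𝔼_δ ‖∑_i δ_i ∂_i f‖_{L_p}^p)^{1/p}`. Let `ε` and `η` be independent points of the cube, and
exchange their coordinates outside a random set `S` that contains each index with probability `r`.
The resulting pair `(ξ, ξ')` is again a pair of independent points, and `∂_i f` at `ξ` with its
`i`-th coordinate replaced by that of `ξ'` is `∂_i f(ξ)` up to the sign `ξ_i ξ'_i`, so the sum over
`i` of these terms has `L_p` norm `N`. Its average over `η` and `S` is `(1 - r) d/dr T_r f`, whence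
`(1 - r) ‖d/dr T_r f‖_{L_p} ≤ N`, and integration gives `‖T_r f - 𝔼 f‖_{L_p} ≤ -log (1 - r) N` for
`0 ≤ r < 1`. This diverges as `r → 1`, but `r ↦ T_r f` is a polynomial of degree at most `d`: the
bound on `[0, b]` with `1 - b ≍ d⁻²`, where the logarithm is `2 log d + O(1)`, extrapolates to
`r = 1` at the cost of the constant factor `5 / 4`, by Hahn–Banach and the extremal growth of
Chebyshev polynomials.
-/

section PolynomialGrowth

open Polynomial

theorem norm_sub_le_neg_mul_log_one_sub {E : Type*} [NormedAddCommGroup E] [NormedSpace ℝ E]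
    {f f' : ℝ → E} {K x : ℝ} (hf : ∀ r ∈ Set.Ico (0 : ℝ) 1, HasDerivAt f (f' r) r)
    (hK : ∀ r ∈ Set.Ico (0 : ℝ) 1, (1 - r) * ‖f' r‖ ≤ K) (hx : x ∈ Set.Ico (0 : ℝ) 1) :
    ‖f x - f 0‖ ≤ -K * Real.log (1 - x) := by
  have hmem : ∀ {r : ℝ}, 0 ≤ r → r ≤ x → r ∈ Set.Ico (0 : ℝ) 1 :=
    fun h0 hr => ⟨h0, hr.trans_lt hx.2⟩
  have hB : ∀ r < (1 : ℝ), HasDerivAt (fun r => -K * Real.log (1 - r)) (K / (1 - r)) r := by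
    intro r hr
    convert! (((hasDerivAt_id' r).const_sub 1).log (sub_pos.2 hr).ne').const_mul (-K) using 1
    ring
  refine image_norm_le_of_norm_deriv_right_le_deriv_boundary' (f := fun r => f r - f 0) (f' := f')
    (B := fun r => -K * Real.log (1 - r)) (B' := fun r => K / (1 - r)) (a := 0) (b := x)
    (fun r hr => ((hf r (hmem hr.1 hr.2)).sub_const _).continuousAt.continuousWithinAt)
    (fun r hr => ((hf r (hmem hr.1 hr.2.le)).sub_const _).hasDerivWithinAt) (by simp)
    (fun r hr => (hB r (hmem hr.1 hr.2).2).continuousAt.continuousWithinAt)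
    (fun r hr => (hB r (hmem hr.1 hr.2.le).2).hasDerivWithinAt) (fun r hr => ?_) ⟨hx.1, le_rfl⟩
  rw [le_div_iff₀' (sub_pos.2 (hmem hr.1 hr.2.le).2)]
  exact hK r (hmem hr.1 hr.2.le)

theorem eval_le_mul_eval_T {n : ℕ} {P : ℝ[X]} {M x : ℝ} (hP : P.degree ≤ n)
    (hM : ∀ t ∈ Set.Icc (-1 : ℝ) 1, |P.eval t| ≤ M) (hx : 1 ≤ x) :
    P.eval x ≤ M * (Chebyshev.T ℝ n).eval x := by
  have hM0 : 0 ≤ M := (abs_nonneg _).trans (hM 0 (by simp))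
  obtain rfl | hM0 := hM0.eq_or_lt
  · have hzero : P = 0 := by
      have hinf : (Set.Icc (-1 : ℝ) 1).Infinite := Set.Icc_infinite (by norm_num)
      refine P.eq_zero_of_infinite_isRoot (hinf.mono fun t ht => ?_)
      exact abs_nonpos_iff.1 (hM t ht)
    simp [hzero]
  · have hscaled := Chebyshev.eval_iterate_derivative_le_of_forall_abs_le_one
      (P := C M⁻¹ * P) (k := 0) hx
      ((degree_C_mul (inv_ne_zero hM0.ne')).trans_le hP) fun t ht => by
        rw [eval_mul, eval_C, abs_mul, abs_of_pos (inv_pos.2 hM0),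
          inv_mul_le_one₀ hM0]
        exact hM t ht
    simpa only [Function.iterate_zero, id, eval_mul, eval_C,
      inv_mul_le_iff₀ hM0] using hscaled

theorem eval_le_mul_eval_T_of_abs_le_on_Icc {n : ℕ} {P : ℝ[X]} {a b M x : ℝ} (hab : a ≤ b)
    (hP : P.degree ≤ n) (hM : ∀ t ∈ Set.Icc a b, |P.eval t| ≤ M) (hx : 1 ≤ x) :
    P.eval ((b - a) / 2 * x + (a + b) / 2) ≤ M * (Chebyshev.T ℝ n).eval x := by
  let Q : ℝ[X] := C ((b - a) / 2) * Polynomial.X + C ((a + b) / 2)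
  have heval : ∀ t, (P.comp Q).eval t = P.eval ((b - a) / 2 * t + (a + b) / 2) := by simp [Q]
  have hdeg : (P.comp Q).degree ≤ n := by
    rw [← natDegree_le_iff_degree_le] at hP ⊢
    calc (P.comp Q).natDegree ≤ P.natDegree * Q.natDegree := natDegree_comp_le
      _ ≤ n * 1 := Nat.mul_le_mul hP natDegree_linear_le
      _ = n := mul_one n
  rw [← heval]
  refine eval_le_mul_eval_T hdeg (fun t ht => ?_) hx
  rw [heval]
  exact hM _ ⟨by nlinarith [ht.1], by nlinarith [ht.2]⟩

theorem eval_one_le_mul_eval_T {n : ℕ} {P : ℝ[X]} {M y : ℝ} (hP : P.degree ≤ n) (hy : 1 ≤ y)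
    (hM : ∀ t ∈ Set.Icc 0 (2 / (1 + y)), |P.eval t| ≤ M) :
    P.eval 1 ≤ M * (Chebyshev.T ℝ n).eval y := by
  have hone : (2 / (1 + y) - 0) / 2 * y + (0 + 2 / (1 + y)) / 2 = 1 := by field_simp; ring
  rw [← hone]
  exact eval_le_mul_eval_T_of_abs_le_on_Icc (by positivity) hP hM hy

theorem eval_T_cosh_log_two_div {n : ℕ} (hn : n ≠ 0) :
    (Chebyshev.T ℝ n).eval (Real.cosh (Real.log 2 / n)) = 5 / 4 := by
  rw [Chebyshev.T_real_cosh, Int.cast_natCast, mul_div_cancel₀ _ (Nat.cast_ne_zero.2 hn),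
    Real.cosh_log two_pos]
  norm_num

theorem one_add_sq_div_two_le_cosh (x : ℝ) : 1 + x ^ 2 / 2 ≤ Real.cosh x := by
  have h := sum_le_hasSum (Finset.range 2)
    (fun k _ => div_nonneg ((even_two_mul k).pow_nonneg x) (Nat.cast_nonneg _)) (Real.hasSum_cosh x)
  simpa [Finset.sum_range_succ] using h

theorem log_ten_le : Real.log 10 ≤ 12 / 5 := by
  have hexp : (10 : ℝ) ^ 5 ≤ Real.exp 12 := by
    calc (10 : ℝ) ^ 5 ≤ 2.7182818283 ^ 12 := by norm_num
      _ ≤ Real.exp 1 ^ 12 := by gcongr; exact Real.exp_one_gt_d9.le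
      _ = Real.exp 12 := by rw [← Real.exp_nat_mul]; norm_num
  have hlog := (Real.log_le_iff_le_exp (by norm_num)).2 hexp
  rw [Real.log_pow] at hlog
  push_cast at hlog
  linarith

theorem neg_log_one_sub_two_div_one_add_cosh_le {d : ℝ} (hd : 1 ≤ d) :
    -Real.log (1 - 2 / (1 + Real.cosh (Real.log 2 / d))) ≤ 2 * Real.log d + 12 / 5 := by
  have : 0 < d := one_pos.trans_le hd
  set u := Real.cosh (Real.log 2 / d) - 1
  have hu0 : 0.24 ≤ d ^ 2 * u := by
    have hcosh := one_add_sq_div_two_le_cosh (Real.log 2 / d)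
    have hlog : 0.48 ≤ Real.log 2 ^ 2 := by nlinarith [Real.log_two_gt_d9]
    calc 0.24 ≤ d ^ 2 * ((Real.log 2 / d) ^ 2 / 2) := by field_simp; linarith
      _ ≤ d ^ 2 * u := by gcongr; linarith
  have hupos : 0 < u := by
    by_contra! h
    nlinarith [sq_nonneg d]
  have hgap : (10 * d ^ 2)⁻¹ ≤ 1 - 2 / (1 + Real.cosh (Real.log 2 / d)) := by
    rw [show Real.cosh (Real.log 2 / d) = u + 1 by ring,
      show 1 - 2 / (1 + (u + 1)) = u / (u + 2) by field_simp; ring, inv_eq_one_div,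
      div_le_div_iff₀ (by positivity) (by positivity)]
    linarith [le_mul_of_one_le_left hupos.le (one_le_pow₀ hd : 1 ≤ d ^ 2)]
  have hlog := Real.log_le_log (by positivity) hgap
  rw [Real.log_inv, Real.log_mul (by norm_num) (by positivity), Real.log_pow] at hlog
  push_cast at hlog
  linarith [log_ten_le]

theorem eval_one_sub_eval_zero_le {d : ℕ} (hd : 1 ≤ d) {P : ℝ[X]} (hP : P.degree ≤ d) {K : ℝ}
    (hK : ∀ r ∈ Set.Ico (0 : ℝ) 1, (1 - r) * |P.derivative.eval r| ≤ K) :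
    P.eval 1 - P.eval 0 ≤ 3 * (Real.log d + 1) * K := by
  have hd' : (1 : ℝ) ≤ d := Nat.one_le_cast.2 hd
  have hlog : 0 ≤ Real.log d := Real.log_nonneg hd'
  have hK0 : 0 ≤ K := (by positivity : (0 : ℝ) ≤ _).trans (hK 0 (by simp))
  set y := Real.cosh (Real.log 2 / d)
  have hy1 : 1 < y := Real.one_lt_cosh.2 (by positivity)
  have hb1 : 2 / (1 + y) < 1 := by rw [div_lt_one] <;> linarith
  have hbound : ∀ x ∈ Set.Icc 0 (2 / (1 + y)),
      |(P - C (P.eval 0)).eval x| ≤ K * (2 * Real.log d + 12 / 5) := by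
    intro x hx
    rw [eval_sub, eval_C]
    calc |P.eval x - P.eval 0| ≤ -K * Real.log (1 - x) :=
          norm_sub_le_neg_mul_log_one_sub (f := fun x => P.eval x) (fun r _ => P.hasDerivAt r) hK
            ⟨hx.1, hx.2.trans_lt hb1⟩
      _ = K * -Real.log (1 - x) := by ring
      _ ≤ K * -Real.log (1 - 2 / (1 + y)) := by gcongr; exact hx.2
      _ ≤ K * (2 * Real.log d + 12 / 5) := by
          gcongr; exact neg_log_one_sub_two_div_one_add_cosh_le hd'
  have hdeg : (P - C (P.eval 0)).degree ≤ d :=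
    (degree_sub_le _ _).trans (max_le hP (degree_C_le.trans (mod_cast d.zero_le)))
  have hcheb := eval_one_le_mul_eval_T hdeg hy1.le hbound
  rw [eval_T_cosh_log_two_div (by positivity), eval_sub, eval_C] at hcheb
  calc P.eval 1 - P.eval 0 ≤ K * (2 * Real.log d + 12 / 5) * (5 / 4) := hcheb
    _ = (5 / 2 * Real.log d + 3) * K := by ring
    _ ≤ 3 * (Real.log d + 1) * K := by gcongr; linarith

theorem exists_linearMap_eq_seminorm {V : Type*} [AddCommGroup V] [Module ℝ V]
    (q : Seminorm ℝ V) (v : V) : ∃ φ : V →ₗ[ℝ] ℝ, φ v = q v ∧ ∀ w, |φ w| ≤ q w := by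
  let _ : SeminormedAddCommGroup V := q.toAddGroupSeminorm.toSeminormedAddCommGroup
  let _ : NormedSpace ℝ V := ⟨fun c w => (map_smul_eq_mul q c w).le⟩
  obtain ⟨φ, hφ, hv⟩ := exists_dual_vector'' ℝ v
  exact ⟨φ.toLinearMap, hv, fun w => (φ.le_of_opNorm_le hφ w).trans_eq (one_mul _)⟩

theorem seminorm_sum_le_of_seminorm_sum_deriv_le {V ι : Type*} [AddCommGroup V] [Module ℝ V]
    [Fintype ι] (q : Seminorm ℝ V) {d : ℕ} (hd : 1 ≤ d) {m : ι → ℕ} {v : ι → V}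
    (hv : ∀ i, d < m i → v i = 0) {K : ℝ}
    (hK : ∀ r ∈ Set.Ico (0 : ℝ) 1, (1 - r) * q (∑ i, (m i * r ^ (m i - 1)) • v i) ≤ K) :
    q (∑ i with m i ≠ 0, v i) ≤ 3 * (Real.log d + 1) * K := by
  obtain ⟨φ, hφ, hφq⟩ := exists_linearMap_eq_seminorm q (∑ i with m i ≠ 0, v i)
  let P : ℝ[X] := ∑ i, C (φ (v i)) * Polynomial.X ^ m i
  have hdeg : P.degree ≤ d := by
    refine (degree_sum_le _ _).trans (Finset.sup_le fun i _ => ?_)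
    by_cases hi : d < m i
    · simp [hv i hi]
    · exact (degree_C_mul_X_pow_le _ _).trans (mod_cast not_lt.1 hi)
  have hderiv : ∀ r, P.derivative.eval r = φ (∑ i, (m i * r ^ (m i - 1)) • v i) := by
    intro r
    simp only [P, derivative_C_mul_X_pow,
      eval_finsetSum, eval_mul, eval_C, eval_pow,
      eval_X, map_sum, map_smul, smul_eq_mul]
    exact Finset.sum_congr rfl fun i _ => by ring
  have hincr : P.eval 1 - P.eval 0 = φ (∑ i with m i ≠ 0, v i) := by
    simp only [P, eval_finsetSum, eval_mul, eval_C,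
      eval_pow, eval_X, one_pow, mul_one, ← Finset.sum_sub_distrib, map_sum,
      Finset.sum_filter]
    refine Finset.sum_congr rfl fun i _ => ?_
    by_cases hi : m i = 0 <;> simp [hi]
  rw [← hφ, ← hincr]
  refine eval_one_sub_eval_zero_le hd hdeg fun r hr => le_trans ?_ (hK r hr)
  rw [hderiv]
  exact mul_le_mul_of_nonneg_left (hφq _) (sub_nonneg.2 hr.2.le)

end PolynomialGrowth

section CubeMean

variable {n : ℕ} {E : Type*}

/-- The average `2⁻ⁿ ∑_ε g(ε)` of a function on the cube, i.e. its expectation under the uniform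
measure. -/
def cubeMean [AddCommGroup E] [Module ℝ E] (g : (Fin n → Bool) → E) : E :=
  (2 ^ n : ℝ)⁻¹ • ∑ ε, g ε

section Module

variable [AddCommGroup E] [Module ℝ E]

theorem cubeMean_const (x : E) : cubeMean (fun _ : Fin n → Bool => x) = x := by
  simp only [cubeMean, Finset.sum_const, Finset.card_univ, Fintype.card_fun, Fintype.card_bool,
    Fintype.card_fin, ← Nat.cast_smul_eq_nsmul ℝ]
  push_cast
  exact inv_smul_smul₀ (by positivity) x

theorem cubeMean_neg (g : (Fin n → Bool) → E) : cubeMean (fun ε => -g ε) = -cubeMean g := by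
  rw [cubeMean, cubeMean, Finset.sum_neg_distrib, smul_neg]

theorem cubeMean_sum {ι : Type*} (s : Finset ι) (g : ι → (Fin n → Bool) → E) :
    cubeMean (fun ε => ∑ i ∈ s, g i ε) = ∑ i ∈ s, cubeMean (g i) := by
  simp only [cubeMean, Finset.smul_sum]
  exact Finset.sum_comm

theorem cubeMean_comp_perm (σ : Equiv.Perm (Fin n → Bool)) (g : (Fin n → Bool) → E) :
    cubeMean (fun ε => g (σ ε)) = cubeMean g :=
  congrArg ((2 ^ n : ℝ)⁻¹ • ·) (Equiv.sum_comp σ g)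

theorem cubeMean_comm (g : (Fin n → Bool) → (Fin n → Bool) → E) :
    cubeMean (fun ε => cubeMean (g ε)) = cubeMean fun η => cubeMean fun ε => g ε η := by
  simp only [cubeMean, ← Finset.smul_sum]
  rw [Finset.sum_comm]

theorem cubeMean_piecewise_swap (S : Finset (Fin n)) (g : (Fin n → Bool) → (Fin n → Bool) → E) :
    (cubeMean fun ε => cubeMean fun η => g (S.piecewise ε η) (S.piecewise η ε)) =
      cubeMean fun ε => cubeMean fun η => g ε η := by
  let swap : (Fin n → Bool) × (Fin n → Bool) → (Fin n → Bool) × (Fin n → Bool) :=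
    fun x => (S.piecewise x.1 x.2, S.piecewise x.2 x.1)
  have hswap : Function.Involutive swap := by
    intro x
    ext i <;> by_cases hi : i ∈ S <;> simp [swap, hi]
  simp only [cubeMean, ← Finset.smul_sum, ← Fintype.sum_prod_type']
  congr 2
  exact Equiv.sum_comp hswap.toPerm fun x => g x.1 x.2

end Module

theorem cubeMean_mono {g h : (Fin n → Bool) → ℝ} (hgh : g ≤ h) : cubeMean g ≤ cubeMean h :=
  smul_le_smul_of_nonneg_left (Finset.sum_le_sum fun ε _ => hgh ε) (by positivity)

theorem cubeMean_nonneg {g : (Fin n → Bool) → ℝ} (hg : 0 ≤ g) : 0 ≤ cubeMean g :=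
  smul_nonneg (by positivity) (Finset.sum_nonneg fun ε _ => hg ε)

theorem norm_cubeMean_rpow_le [NormedAddCommGroup E] [NormedSpace ℝ E] {p : ℝ} (hp : 1 ≤ p)
    (g : (Fin n → Bool) → E) : ‖cubeMean g‖ ^ p ≤ cubeMean fun ε => ‖g ε‖ ^ p := by
  have hweights : ∑ _ε : Fin n → Bool, (2 ^ n : ℝ)⁻¹ = 1 := by simp
  calc ‖cubeMean g‖ ^ p ≤ (∑ ε, (2 ^ n : ℝ)⁻¹ * ‖g ε‖) ^ p := by
        rw [cubeMean, norm_smul_of_nonneg (by positivity), ← Finset.mul_sum]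
        gcongr
        exact norm_sum_le _ _
    _ ≤ ∑ ε, (2 ^ n : ℝ)⁻¹ * ‖g ε‖ ^ p :=
        Real.rpow_arith_mean_le_arith_mean_rpow _ _ _ (fun _ _ => by positivity) hweights
          (fun _ _ => norm_nonneg _) hp
    _ = cubeMean fun ε => ‖g ε‖ ^ p := (Finset.mul_sum _ _ _).symm

end CubeMean

section LpNorm

variable {n : ℕ} {E : Type*} [NormedAddCommGroup E] {p : ℝ}

theorem lpNorm_rpow (hp : p ≠ 0) (f : (Fin n → Bool) → E) :
    lpNorm p f ^ p = cubeMean fun ε => ‖f ε‖ ^ p := by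
  rw [lpNorm, one_div]
  exact Real.rpow_inv_rpow (cubeMean_nonneg fun _ => by positivity) hp

theorem lpNorm_add_le (hp : 1 ≤ p) (f g : (Fin n → Bool) → E) :
    lpNorm p (f + g) ≤ lpNorm p f + lpNorm p g := by
  have hweight : 0 ≤ (2 ^ n : ℝ)⁻¹ := by positivity
  have hsum : ∀ h : (Fin n → Bool) → E, 0 ≤ ∑ ε, ‖h ε‖ ^ p := fun h => by positivity
  have htriangle : (∑ ε, ‖(f + g) ε‖ ^ p) ^ (1 / p) ≤
      (∑ ε, ‖f ε‖ ^ p) ^ (1 / p) + (∑ ε, ‖g ε‖ ^ p) ^ (1 / p) := by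
    refine le_trans ?_ (Real.Lp_add_le_of_nonneg _ hp (fun ε _ => norm_nonneg (f ε))
      fun ε _ => norm_nonneg (g ε))
    gcongr with ε
    exact norm_add_le _ _
  unfold lpNorm
  rw [Real.mul_rpow hweight (hsum (f + g)), Real.mul_rpow hweight (hsum f),
    Real.mul_rpow hweight (hsum g), ← mul_add]
  exact mul_le_mul_of_nonneg_left htriangle (by positivity)

theorem lpNorm_smul [NormedSpace ℝ E] (hp : p ≠ 0) (c : ℝ) (f : (Fin n → Bool) → E) :
    lpNorm p (c • f) = ‖c‖ * lpNorm p f := by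
  have hmean : 0 ≤ (2 ^ n : ℝ)⁻¹ * ∑ ε, ‖f ε‖ ^ p := by positivity
  simp only [lpNorm, Pi.smul_apply, norm_smul]
  simp only [Real.mul_rpow (norm_nonneg _) (norm_nonneg _), ← Finset.mul_sum,
    mul_left_comm _ (‖c‖ ^ p)]
  rw [Real.mul_rpow (by positivity) hmean, one_div,
    Real.rpow_rpow_inv (norm_nonneg _) hp]

/-- `lpNorm p` as a seminorm on the functions on the cube, so that Hahn–Banach applies to it. -/
def lpSeminorm (n : ℕ) (E : Type*) [NormedAddCommGroup E] [NormedSpace ℝ E] (hp : 1 ≤ p) :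
    Seminorm ℝ ((Fin n → Bool) → E) :=
  Seminorm.of (lpNorm p) (lpNorm_add_le hp) (lpNorm_smul (one_pos.trans_le hp).ne')

theorem lpNorm_cubeMean_le [NormedSpace ℝ E] (hp : 1 ≤ p)
    (g : (Fin n → Bool) → (Fin n → Bool) → E) :
    lpNorm p (fun ε => cubeMean (g ε)) ≤
      (cubeMean fun ε => cubeMean fun η => ‖g ε η‖ ^ p) ^ (1 / p) :=
  Real.rpow_le_rpow (cubeMean_nonneg fun _ => by positivity)
    (cubeMean_mono fun ε => norm_cubeMean_rpow_le hp (g ε)) (by positivity)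

end LpNorm

section Walsh

variable {n : ℕ}

theorem sgn_not (b : Bool) : sgn (!b) = -sgn b := by cases b <;> simp [sgn]

theorem sgn_mul_sgn (a b : Bool) : sgn a * sgn b = if a = b then 1 else -1 := by
  cases a <;> cases b <;> simp [sgn]

theorem sum_walsh_mul_walsh (ε δ : Fin n → Bool) :
    ∑ A : Finset (Fin n), walsh A ε * walsh A δ = if ε = δ then (2 ^ n : ℝ) else 0 := by
  calc ∑ A : Finset (Fin n), walsh A ε * walsh A δ = ∏ i, (1 + sgn (ε i) * sgn (δ i)) := by
        simp only [walsh, ← Finset.prod_mul_distrib, Finset.prod_one_add, Finset.powerset_univ]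
    _ = if ε = δ then (2 ^ n : ℝ) else 0 := by
        simp only [sgn_mul_sgn]
        split_ifs with h
        · simp only [h, if_true, Finset.prod_const, Finset.card_univ, Fintype.card_fin]
          norm_num
        · obtain ⟨i, hi⟩ := Function.ne_iff.1 h
          exact Finset.prod_eq_zero (Finset.mem_univ i) (by simp [hi])

theorem walsh_congr {A : Finset (Fin n)} {ε δ : Fin n → Bool} (h : ∀ i ∈ A, ε i = δ i) :
    walsh A ε = walsh A δ :=
  Finset.prod_congr rfl fun i hi => congrArg sgn (h i hi)

theorem walsh_update_not (A : Finset (Fin n)) (ε : Fin n → Bool) (i : Fin n) :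
    walsh A (Function.update ε i (!ε i)) = if i ∈ A then -walsh A ε else walsh A ε := by
  split_ifs with hi
  · have herase : walsh (A.erase i) (Function.update ε i (!ε i)) = walsh (A.erase i) ε :=
      walsh_congr fun j hj => Function.update_of_ne (Finset.ne_of_mem_erase hj) _ _
    simp only [walsh] at herase ⊢
    rw [← Finset.mul_prod_erase A _ hi, ← Finset.mul_prod_erase A _ hi, herase,
      Function.update_self, sgn_not, neg_mul]
  · exact walsh_congr fun j hj => Function.update_of_ne (ne_of_mem_of_not_mem hj hi) _ _

/-- The component `f̂(A) w_A` of `f` in its Walsh expansion. -/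
def walshPart (f : (Fin n → Bool) → X) (A : Finset (Fin n)) : (Fin n → Bool) → X :=
  fun ε => walsh A ε • coeff f A

theorem sum_walshPart (f : (Fin n → Bool) → X) : ∑ A, walshPart f A = f := by
  ext ε
  calc (∑ A, walshPart f A) ε
      = ∑ δ, ((2 ^ n : ℝ)⁻¹ * ∑ A : Finset (Fin n), walsh A ε * walsh A δ) • f δ := by
        simp only [Finset.sum_apply, walshPart, coeff, Finset.smul_sum, Finset.mul_sum,
          Finset.sum_smul, smul_smul, mul_left_comm (walsh _ ε)]
        exact Finset.sum_comm
    _ = f ε := by simp [sum_walsh_mul_walsh]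

theorem walshPart_empty (f : (Fin n → Bool) → X) : walshPart f ∅ = fun _ => cubeMean f := by
  ext ε
  simp [walshPart, coeff, walsh, cubeMean]

theorem sub_cubeMean_eq_sum_walshPart (f : (Fin n → Bool) → X) :
    (fun ε => f ε - cubeMean f) = ∑ A with Finset.card A ≠ 0, walshPart f A := by
  have hsplit := Fintype.sum_eq_add_sum_compl ∅ (walshPart f)
  rw [sum_walshPart, walshPart_empty] at hsplit
  have hne : ({∅}ᶜ : Finset (Finset (Fin n))) =
      Finset.univ.filter fun A => A.card ≠ 0 := by ext A; simp
  rw [← hne, ← sub_eq_iff_eq_add'.2 hsplit]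
  rfl

theorem pderiv_eq_sum_walshPart (i : Fin n) (f : (Fin n → Bool) → X) :
    pderiv i f = ∑ A with i ∈ A, walshPart f A := by
  ext ε
  calc pderiv i f ε
      = (2 : ℝ)⁻¹ • ∑ A, (walshPart f A ε - walshPart f A (Function.update ε i (!ε i))) := by
        rw [Finset.sum_sub_distrib, ← Finset.sum_apply, ← Finset.sum_apply, sum_walshPart]
        rfl
    _ = ∑ A with i ∈ A, walshPart f A ε := by
        rw [Finset.smul_sum, Finset.sum_filter]
        refine Finset.sum_congr rfl fun A _ => ?_
        simp only [walshPart, walsh_update_not]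
        split_ifs <;> module
    _ = _ := (Finset.sum_apply _ _ _).symm

theorem cubeMean_walshPart_piecewise (f : (Fin n → Bool) → X) (A S : Finset (Fin n))
    (ε : Fin n → Bool) :
    cubeMean (fun η => walshPart f A (S.piecewise ε η)) = if A ⊆ S then walshPart f A ε else 0 := by
  split_ifs with hAS
  · have hconst : ∀ η, walshPart f A (S.piecewise ε η) = walshPart f A ε := fun η =>
      congrArg (· • _) (walsh_congr fun i hi => S.piecewise_eq_of_mem _ _ (hAS hi))
    simp only [hconst, cubeMean_const]
  · obtain ⟨j, hjA, hjS⟩ := Finset.not_subset.1 hAS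
    have hflip : Function.Involutive fun η : Fin n → Bool => Function.update η j (!η j) := by
      intro η
      simp
    have hneg : ∀ η, walshPart f A (S.piecewise ε (Function.update η j (!η j))) =
        -walshPart f A (S.piecewise ε η) := by
      intro η
      rw [← Finset.update_piecewise_of_notMem _ _ _ hjS,
        ← S.piecewise_eq_of_notMem ε η hjS, walshPart, walshPart, walsh_update_not, if_pos hjA,
        neg_smul]
    have hself := cubeMean_comp_perm hflip.toPerm fun η => walshPart f A (S.piecewise ε η)
    simp only [Function.Involutive.coe_toPerm, hneg, cubeMean_neg] at hself
    have : IsAddTorsionFree X := .of_isTorsionFree ℝ X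
    exact self_eq_neg.1 hself.symm

end Walsh

section BernoulliWeight

open scoped symmDiff

variable {ι R : Type*} [Fintype ι] [DecidableEq ι] [CommRing R]

/-- The probability that the random set containing each element of `ι` independently with
probability `r` equals `S`. -/
def bernoulliWeight (r : R) (S : Finset ι) : R :=
  r ^ S.card * (1 - r) ^ Sᶜ.card

theorem sum_bernoulliWeight (r : R) {A B : Finset ι} (hAB : Disjoint A B) :
    ∑ S with A ⊆ S ∧ Disjoint B S, bernoulliWeight r S = r ^ A.card * (1 - r) ^ B.card := by
  have hterm : ∀ S : Finset ι, (∏ i ∈ S, if i ∉ B then r else 0) *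
      (∏ i ∈ Finset.univ \ S, if i ∉ A then 1 - r else 0) =
        if A ⊆ S ∧ Disjoint B S then bernoulliWeight r S else 0 := by
    intro S
    have hmem : (A ⊆ S ∧ Disjoint B S) ↔ (∀ i ∈ S, i ∉ B) ∧ ∀ i ∈ Sᶜ, i ∉ A := by
      simp only [Finset.disjoint_right, Finset.subset_iff, Finset.mem_compl]
      grind
    simp only [hmem, ← Finset.compl_eq_univ_sdiff, Finset.prod_ite_zero, ite_zero_mul_ite_zero,
      Finset.prod_const, bernoulliWeight]
  have hfactor : ∀ i, (if i ∉ B then r else 0) + (if i ∉ A then 1 - r else 0) =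
      (if i ∈ A then r else 1) * (if i ∈ B then 1 - r else 1) := by
    intro i
    have hi : ¬(i ∈ A ∧ i ∈ B) := fun h => Finset.disjoint_left.1 hAB h.1 h.2
    split_ifs <;> simp_all
  calc ∑ S with A ⊆ S ∧ Disjoint B S, bernoulliWeight r S
      = ∏ i, ((if i ∉ B then r else 0) + (if i ∉ A then 1 - r else 0)) := by
        rw [Finset.prod_add, Finset.powerset_univ, Finset.sum_filter]
        exact Finset.sum_congr rfl fun S _ => (hterm S).symm
    _ = r ^ A.card * (1 - r) ^ B.card := by
        simp only [hfactor, Finset.prod_mul_distrib, Fintype.prod_ite_mem, Finset.prod_const]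

theorem sum_bernoulliWeight_subset_symmDiff (r : R) {A : Finset ι} {i : ι} (hi : i ∈ A) :
    ∑ S with A ⊆ S ∆ {i}, bernoulliWeight r S = (1 - r) * r ^ (A.card - 1) := by
  have hiff : ∀ S, A ⊆ S ∆ {i} ↔ A.erase i ⊆ S ∧ Disjoint {i} S := by
    intro S
    simp only [Finset.subset_iff, Finset.mem_symmDiff, Finset.mem_erase, Finset.mem_singleton,
      Finset.disjoint_singleton_left]
    grind
  have hdisj : Disjoint (A.erase i) {i} := by simp
  simp only [hiff, sum_bernoulliWeight r hdisj, Finset.card_erase_of_mem hi,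
    Finset.card_singleton, pow_one]
  ring

end BernoulliWeight

section Decoupling

open scoped symmDiff

variable {n : ℕ} {p : ℝ}

theorem pderiv_update (i : Fin n) (f : (Fin n → Bool) → X) (ε : Fin n → Bool) (b : Bool) :
    pderiv i f (Function.update ε i b) = sgn (b == ε i) • pderiv i f ε := by
  obtain rfl | rfl := Bool.eq_or_eq_not b (ε i)
  · simp [sgn]
  · simp only [pderiv, sgn, Function.update_idem, Function.update_self, Bool.not_not,
      Function.update_eq_self, Bool.not_beq_self, Bool.false_eq_true, if_false]
    module

/-- The sum `∑_i ∂_i f(ξ₁, …, ξ'_i, …, ξ_n)` of the partial derivatives of `f`, each evaluated at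
`ξ` with the coordinate it differentiates replaced by that of `ξ'`. -/
def resampledGrad (f : (Fin n → Bool) → X) (ξ ξ' : Fin n → Bool) : X :=
  ∑ i, pderiv i f (Function.update ξ i (ξ' i))

/-- The right-hand side `(𝔼_δ ‖∑_i δ_i ∂_i f‖_{L_p}^p)^{1/p}` of Pisier's inequality. -/
def radGradNorm (p : ℝ) (f : (Fin n → Bool) → X) : ℝ :=
  (cubeMean fun δ => lpNorm p (fun ε => ∑ i, sgn (δ i) • pderiv i f ε) ^ p) ^ (1 / p)

-- For fixed `ξ`, the signs `δ_i = ξ_i ξ'_i` are uniformly distributed when `ξ'` is.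
theorem radGradNorm_eq_cubeMean_resampledGrad (hp : p ≠ 0) (f : (Fin n → Bool) → X) :
    radGradNorm p f =
      (cubeMean fun ξ => cubeMean fun ξ' => ‖resampledGrad f ξ ξ'‖ ^ p) ^ (1 / p) := by
  simp only [radGradNorm, lpNorm_rpow hp]
  rw [cubeMean_comm fun δ ε => ‖∑ i, sgn (δ i) • pderiv i f ε‖ ^ p]
  congr 2
  ext ξ
  have hσ : Function.Involutive fun (ξ' : Fin n → Bool) i => ξ' i == ξ i := by
    intro ξ'
    ext i
    cases h : ξ i <;> cases h' : ξ' i <;> simp [h, h']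
  rw [← cubeMean_comp_perm hσ.toPerm fun δ => ‖∑ i, sgn (δ i) • pderiv i f ξ‖ ^ p]
  simp only [resampledGrad, pderiv_update, Function.Involutive.coe_toPerm]

/-- The average over `η` of the resampled gradient between the two mixtures of `ε` and `η`
along `S`. -/
def blockGrad (S : Finset (Fin n)) (f : (Fin n → Bool) → X) (ε : Fin n → Bool) : X :=
  cubeMean fun η => resampledGrad f (S.piecewise ε η) (S.piecewise η ε)

theorem lpNorm_blockGrad_le (hp : 1 ≤ p) (S : Finset (Fin n)) (f : (Fin n → Bool) → X) :
    lpNorm p (blockGrad S f) ≤ radGradNorm p f := by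
  rw [radGradNorm_eq_cubeMean_resampledGrad (one_pos.trans_le hp).ne', ← cubeMean_piecewise_swap S]
  exact lpNorm_cubeMean_le hp _

theorem update_piecewise_swap {ι α : Type*} [DecidableEq ι] (S : Finset ι) (f g : ι → α) (i : ι) :
    Function.update (S.piecewise f g) i (S.piecewise g f i) = (S ∆ {i}).piecewise f g := by
  ext j
  obtain rfl | hji := eq_or_ne j i
  · by_cases hj : j ∈ S <;> simp [Finset.mem_symmDiff, hj]
  · by_cases hj : j ∈ S <;> simp [Finset.mem_symmDiff, hj, hji]

theorem blockGrad_eq_sum_walshPart (S : Finset (Fin n)) (f : (Fin n → Bool) → X) :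
    blockGrad S f = ∑ i, ∑ A with i ∈ A, if A ⊆ S ∆ {i} then walshPart f A else 0 := by
  ext ε
  simp only [blockGrad, resampledGrad, update_piecewise_swap, pderiv_eq_sum_walshPart,
    Finset.sum_apply, cubeMean_sum, cubeMean_walshPart_piecewise]
  refine Finset.sum_congr rfl fun i _ => Finset.sum_congr rfl fun A _ => ?_
  split_ifs <;> rfl

theorem sum_bernoulliWeight_smul_blockGrad (r : ℝ) (f : (Fin n → Bool) → X) :
    ∑ S, bernoulliWeight r S • blockGrad S f =
      (1 - r) • ∑ A, (A.card * r ^ (A.card - 1)) • walshPart f A := by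
  calc ∑ S, bernoulliWeight r S • blockGrad S f
      = ∑ i, ∑ A with i ∈ A, (∑ S with A ⊆ S ∆ {i}, bernoulliWeight r S) • walshPart f A := by
        simp only [blockGrad_eq_sum_walshPart, Finset.smul_sum, smul_ite, smul_zero]
        rw [Finset.sum_comm]
        refine Finset.sum_congr rfl fun i _ => ?_
        rw [Finset.sum_comm]
        exact Finset.sum_congr rfl fun A _ => by rw [Finset.sum_smul, Finset.sum_filter]
    _ = ∑ i, ∑ A with i ∈ A, ((1 - r) * r ^ (A.card - 1)) • walshPart f A :=
        Finset.sum_congr rfl fun i _ => Finset.sum_congr rfl fun A hA => by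
          rw [sum_bernoulliWeight_subset_symmDiff r (Finset.mem_filter.1 hA).2]
    _ = ∑ A, A.card • ((1 - r) * r ^ (A.card - 1)) • walshPart f A := by
        simp only [Finset.sum_filter]
        rw [Finset.sum_comm]
        simp
    _ = _ := by
        rw [Finset.smul_sum]
        refine Finset.sum_congr rfl fun A _ => ?_
        module

theorem lpNorm_sum_deriv_walshPart_le (hp : 1 ≤ p) (f : (Fin n → Bool) → X) {r : ℝ}
    (hr : r ∈ Set.Icc (0 : ℝ) 1) :
    (1 - r) * lpNorm p (∑ A, (A.card * r ^ (A.card - 1)) • walshPart f A) ≤ radGradNorm p f := by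
  have hr1 : 0 ≤ 1 - r := sub_nonneg.2 hr.2
  have hweight : ∑ S : Finset (Fin n), bernoulliWeight r S = 1 := by
    simpa using sum_bernoulliWeight r (Finset.disjoint_empty_right (∅ : Finset (Fin n)))
  have hball := ((lpSeminorm n X hp).convex_closedBall 0 (radGradNorm p f)).sum_mem
    (t := Finset.univ) (w := bernoulliWeight r) (z := fun S => blockGrad S f)
    (fun S _ => mul_nonneg (pow_nonneg hr.1 _) (pow_nonneg hr1 _)) hweight
    fun S _ => (Seminorm.mem_closedBall_zero _).2 (lpNorm_blockGrad_le hp S f)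
  rw [sum_bernoulliWeight_smul_blockGrad, Seminorm.mem_closedBall_zero, map_smul_eq_mul,
    Real.norm_of_nonneg hr1] at hball
  exact hball

end Decoupling

theorem stmt2_general {X : Type*} [NormedAddCommGroup X] [NormedSpace ℂ X]
    (n d : ℕ) (hd : 1 ≤ d) (p : ℝ) (hp : 1 ≤ p) (f : (Fin n → Bool) → X) (hf : degLE f d) :
    lpNorm p (fun ε => f ε - (2 ^ n : ℝ)⁻¹ • ∑ δ : Fin n → Bool, f δ) ≤
      3 * (Real.log d + 1) *
        ((2 ^ n : ℝ)⁻¹ * ∑ δ : Fin n → Bool,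
          (lpNorm p (fun ε => ∑ i : Fin n, sgn (δ i) • pderiv i f ε)) ^ p) ^ (1 / p) := by
  have hvanish : ∀ A : Finset (Fin n), d < A.card → walshPart f A = 0 := by
    intro A hA
    ext ε
    rw [walshPart, hf A hA, smul_zero, Pi.zero_apply]
  have hgrowth := seminorm_sum_le_of_seminorm_sum_deriv_le (lpSeminorm n X hp) hd hvanish
    fun r hr => lpNorm_sum_deriv_walshPart_le hp f (Set.Ico_subset_Icc_self hr)
  rw [← sub_cubeMean_eq_sum_walshPart] at hgrowth
  exact hgrowth

/-- **Pisier's inequality for functions of low degree.** -/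
theorem stmt2 {X : Type*} [NormedAddCommGroup X] [NormedSpace ℂ X] [CompleteSpace X]
    (n d : ℕ) (hd : 1 ≤ d) (hdn : d ≤ n) (p : ℝ) (hp : 1 ≤ p)
    (f : (Fin n → Bool) → X) (hf : degLE f d) :
    lpNorm p (fun ε => f ε - (2 ^ n : ℝ)⁻¹ • ∑ δ : Fin n → Bool, f δ) ≤
      3 * (Real.log d + 1) *
        ((2 ^ n : ℝ)⁻¹ * ∑ δ : Fin n → Bool,
          (lpNorm p (fun ε => ∑ i : Fin n, sgn (δ i) • pderiv i f ε)) ^ p) ^ (1 / p) :=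
  stmt2_general n d hd p hp f hf

end HammingCube
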